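/- arXiv:1302.5573 — 2 statements merged into one kernel-verified Lean document; each statement's English description precedes it below -/
import Mathlib

section
/- Let r, τ, λ be positive real numbers with τ − rλ > 0, and let Δ = {(x, y) ∈ ℝ² : 0 ≤ y ≤ λ, 0 ≤ x, x + r y ≤ τ}. For every b = (b₁, b₂) ∈ ℝ² satisfying r b₁ = 2 b₂ (a mass linear pair), the inner product of the mass center of Δ with b equals ⟨Cm(Δ), b⟩ = b₁ τ / 2. (This is the computation in the paper's Hirzebruch-surface Example showing that for a mass linear lattice vector b the invariant is Λ(φ_b) = exp(π i b₁ τ), so that φ_b is homotopically nontrivial when b₁τ is odd.) -/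
open MeasureTheory

/-!
The area-preserving map `(x, y) ↦ (τ - r y - x, y)` reflects every horizontal segment of the
trapezoid in its midpoint, so it preserves the trapezoid. If `r b₁ = 2 b₂`, the linear form
`x b₁ + y b₂` and its composite with this reflection have constant sum `b₁ τ`. Averaging over the
trapezoid, the value of the form at the mass center is half of that constant.
-/

theorem setAverage_eq_inv_two_smul_of_add_comp_eq_const {α E : Type*} [MeasurableSpace α]
    {μ : Measure α} [NormedAddCommGroup E] [NormedSpace ℝ E] [CompleteSpace E]
    {T : α → α} {s : Set α} {f : α → E} {c : E}
    (hT : MeasurePreserving T μ μ) (hT' : MeasurableEmbedding T) (hTs : T ⁻¹' s = s)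
    (hs₀ : μ s ≠ 0) (hs : μ s ≠ ⊤) (hf : IntegrableOn f s μ) (hfT : ∀ x, f x + f (T x) = c) :
    ⨍ x in s, f x ∂μ = (2⁻¹ : ℝ) • c := by
  have integral_comp : ∫ x in s, f (T x) ∂μ = ∫ x in s, f x ∂μ := by
    simpa only [hTs] using hT.setIntegral_preimage_emb hT' f s
  have integrable_comp : IntegrableOn (fun x ↦ f (T x)) s μ := by
    simpa only [hTs, Function.comp_def] using (hT.integrableOn_comp_preimage hT').2 hf
  have two_integral : (2 : ℝ) • ∫ x in s, f x ∂μ = μ.real s • c :=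
    calc (2 : ℝ) • ∫ x in s, f x ∂μ
        = ∫ x in s, f x ∂μ + ∫ x in s, f (T x) ∂μ := by rw [integral_comp, two_smul]
      _ = ∫ x in s, (f x + f (T x)) ∂μ := (integral_add hf integrable_comp).symm
      _ = μ.real s • c := by simp only [hfT, setIntegral_const]
  have hμs : μ.real s ≠ 0 := (measureReal_ne_zero_iff hs).2 hs₀
  rw [setAverage_eq, inv_smul_eq_iff₀ hμs, smul_comm, ← two_integral, inv_smul_smul₀ two_ne_zero]

/-- The map reflecting each horizontal fiber `G × {y}` by `x ↦ ℓ y - x`; for `G = ℝ` it swaps the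
endpoints of the segment `[0, ℓ y] × {y}`. The fiber coordinate comes first, as in the coordinates
`(x, y)` of the plane. -/
def fiberReflection {G β : Type*} [Sub G] (ℓ : β → G) (p : G × β) : G × β :=
  (ℓ p.2 - p.1, p.2)

namespace fiberReflection

variable {G β : Type*} [AddCommGroup G]

theorem involutive (ℓ : β → G) : Function.Involutive (fiberReflection ℓ) := fun p ↦
  Prod.ext (sub_sub_cancel (ℓ p.2) p.1) rfl

variable [MeasurableSpace G] [MeasurableSpace β] [MeasurableAdd₂ G] [MeasurableNeg G]
  {ℓ : β → G}

theorem measurable (hℓ : Measurable ℓ) : Measurable (fiberReflection ℓ) :=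
  ((hℓ.comp measurable_snd).sub measurable_fst).prodMk measurable_snd

theorem measurableEmbedding (hℓ : Measurable ℓ) : MeasurableEmbedding (fiberReflection ℓ) :=
  (MeasurableEquiv.ofInvolutive _ (involutive ℓ) (measurable hℓ)).measurableEmbedding

theorem measurePreserving (hℓ : Measurable ℓ) (μ : Measure G) [SFinite μ]
    [μ.IsAddLeftInvariant] [μ.IsNegInvariant] (ν : Measure β) [SFinite ν] :
    MeasurePreserving (fiberReflection ℓ) (μ.prod ν) (μ.prod ν) := by
  have skew : MeasurePreserving (fun q : β × G ↦ (q.1, ℓ q.1 - q.2)) (ν.prod μ) (ν.prod μ) :=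
    (MeasurePreserving.id ν).skew_product (g := fun y x ↦ ℓ y - x)
      ((hℓ.comp measurable_fst).sub measurable_snd)
      (.of_forall fun y ↦ Measure.map_sub_left_eq_self μ (ℓ y))
  exact Measure.measurePreserving_swap.comp (skew.comp Measure.measurePreserving_swap)

end fiberReflection

theorem integrableOn_of_continuous_of_isBounded {X E : Type*} [PseudoMetricSpace X] [ProperSpace X]
    [MeasurableSpace X] [OpensMeasurableSpace X] [NormedAddCommGroup E] {μ : Measure X}
    [IsFiniteMeasureOnCompacts μ] {f : X → E} {s : Set X} (hf : Continuous f)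
    (hs : Bornology.IsBounded s) : IntegrableOn f s μ :=
  have integrableOn_closure : IntegrableOn f (closure s) μ :=
    hf.continuousOn.integrableOn_compact' hs.isCompact_closure measurableSet_closure
  integrableOn_closure.mono_set subset_closure

/-- The moment polytope of a Hirzebruch surface, with vertices `(0, 0)`, `(τ, 0)`, `(0, lam)` and
`(τ - r * lam, lam)` when `r`, `lam` and `τ - r * lam` are positive. -/
def hirzebruchTrapezoid (r τ lam : ℝ) : Set (ℝ × ℝ) :=
  {p | 0 ≤ p.2 ∧ p.2 ≤ lam ∧ 0 ≤ p.1 ∧ p.1 + r * p.2 ≤ τ}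

namespace hirzebruchTrapezoid

theorem isBounded (r τ lam : ℝ) : Bornology.IsBounded (hirzebruchTrapezoid r τ lam) := by
  refine ((Metric.isBounded_Icc 0 (τ + |r| * lam)).prod (Metric.isBounded_Icc 0 lam)).subset ?_
  rintro ⟨x, y⟩ ⟨hy₀, hy, hx₀, hx⟩
  have neg_mul_le : -(r * y) ≤ |r| * lam :=
    calc -(r * y) = -r * y := (neg_mul r y).symm
      _ ≤ |r| * lam := mul_le_mul (neg_le_abs r) hy hy₀ (abs_nonneg r)
  exact ⟨⟨hx₀, by linarith only [hx, neg_mul_le]⟩, hy₀, hy⟩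

theorem fiberReflection_preimage (r τ lam : ℝ) :
    fiberReflection (fun y ↦ τ - r * y) ⁻¹' hirzebruchTrapezoid r τ lam =
      hirzebruchTrapezoid r τ lam := by
  ext ⟨x, y⟩
  simp only [hirzebruchTrapezoid, fiberReflection, Set.mem_preimage, Set.mem_ofPred_eq]
  constructor <;> rintro ⟨hy₀, hy, hx₀, hx⟩ <;> refine ⟨hy₀, hy, ?_, ?_⟩ <;> linarith

theorem volume_pos {r τ lam : ℝ} (hlam : 0 < lam) (h : r * lam < 2 * τ) :
    0 < volume (hirzebruchTrapezoid r τ lam) := by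
  let U : Set (ℝ × ℝ) := {p | 0 < p.2 ∧ p.2 < lam ∧ 0 < p.1 ∧ p.1 + r * p.2 < τ}
  have isOpen_U : IsOpen U :=
    (isOpen_lt continuous_const continuous_snd).inter <|
      (isOpen_lt continuous_snd continuous_const).inter <|
        (isOpen_lt continuous_const continuous_fst).inter <|
          isOpen_lt (continuous_fst.add (continuous_snd.const_mul r)) continuous_const
  -- The midpoint of the horizontal segment at height `lam / 2`.
  have nonempty_U : U.Nonempty :=
    ⟨((τ - r * (lam / 2)) / 2, lam / 2), by
      refine ⟨?_, ?_, ?_, ?_⟩ <;> dsimp only <;> linarith⟩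
  have U_subset : U ⊆ hirzebruchTrapezoid r τ lam := fun _ ⟨hy₀, hy, hx₀, hx⟩ ↦
    ⟨hy₀.le, hy.le, hx₀.le, hx.le⟩
  exact (isOpen_U.measure_pos volume nonempty_U).trans_le (measure_mono U_subset)

end hirzebruchTrapezoid

theorem stmt10_general {r τ : ℝ} {Δ : Set (ℝ × ℝ)} (hΔ : Bornology.IsBounded Δ)
    (hvol : volume Δ ≠ 0) (hsymm : fiberReflection (fun y ↦ τ - r * y) ⁻¹' Δ = Δ)
    {b₁ b₂ : ℝ} (hb : r * b₁ = 2 * b₂) :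
    ((∫ p in Δ, p.1) / (volume Δ).toReal) * b₁
      + ((∫ p in Δ, p.2) / (volume Δ).toReal) * b₂ = b₁ * τ / 2 := by
  have measurable_length : Measurable fun y : ℝ ↦ τ - r * y := by fun_prop
  have pairing_add_reflection (p : ℝ × ℝ) :
      (p.1 * b₁ + p.2 * b₂) + ((fiberReflection (fun y ↦ τ - r * y) p).1 * b₁
        + (fiberReflection (fun y ↦ τ - r * y) p).2 * b₂) = b₁ * τ := by
    dsimp only [fiberReflection]
    linear_combination -p.2 * hb
  have average_pairing : ⨍ p in Δ, (p.1 * b₁ + p.2 * b₂) = (2⁻¹ : ℝ) • (b₁ * τ) :=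
    setAverage_eq_inv_two_smul_of_add_comp_eq_const
      (fiberReflection.measurePreserving measurable_length volume volume)
      (fiberReflection.measurableEmbedding measurable_length) hsymm hvol hΔ.measure_lt_top.ne
      (integrableOn_of_continuous_of_isBounded (by fun_prop) hΔ) pairing_add_reflection
  have integral_pairing : ∫ p in Δ, (p.1 * b₁ + p.2 * b₂)
      = (∫ p in Δ, p.1) * b₁ + (∫ p in Δ, p.2) * b₂ := by
    rw [integral_add (integrableOn_of_continuous_of_isBounded (by fun_prop) hΔ)
      (integrableOn_of_continuous_of_isBounded (by fun_prop) hΔ),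
      integral_mul_const, integral_mul_const]
  rw [setAverage_eq, integral_pairing, smul_eq_mul, smul_eq_mul, Measure.real] at average_pairing
  linear_combination average_pairing

/-- For the Hirzebruch trapezoid `Δ` and a mass linear vector `b = (b₁,b₂)` with
`r b₁ = 2 b₂`, the inner product of the mass center of `Δ` with `b` equals `b₁ τ / 2`. -/
theorem stmt10 (r τ lam : ℝ) (hr : 0 < r) (hτ : 0 < τ) (hlam : 0 < lam)
    (hσ : 0 < τ - r * lam)
    (Δ : Set (ℝ × ℝ))
    (hΔ : Δ = {p : ℝ × ℝ | 0 ≤ p.2 ∧ p.2 ≤ lam ∧ 0 ≤ p.1 ∧ p.1 + r * p.2 ≤ τ})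
    (b₁ b₂ : ℝ) (hb : r * b₁ = 2 * b₂) :
    ((∫ p in Δ, p.1) / (volume Δ).toReal) * b₁
      + ((∫ p in Δ, p.2) / (volume Δ).toReal) * b₂ = b₁ * τ / 2 := by
  obtain rfl : Δ = hirzebruchTrapezoid r τ lam := hΔ
  exact stmt10_general (hirzebruchTrapezoid.isBounded r τ lam)
    (hirzebruchTrapezoid.volume_pos hlam (by linarith)).ne'
    (hirzebruchTrapezoid.fiberReflection_preimage r τ lam) hb
end

section
/- Let n ≥ 1, let τ > λ > 0 be real numbers, set σ = τ − λ, and let Δ = {x ∈ ℝⁿ : xᵢ ≥ 0 for all i, x₁ + ⋯ + xₙ ≤ τ, and xₙ ≤ λ}. Then the mass center of Δ is Cm(Δ) = (1/(τⁿ − σⁿ)) · ( ((τⁿ⁺¹ − σⁿ⁺¹)/(n+1)) · w − λ σⁿ · eₙ ), where w = (1, …, 1) and eₙ = (0, …, 0, 1); that is, for i < n the i-th coordinate of Cm(Δ) is (τⁿ⁺¹ − σⁿ⁺¹)/((n+1)(τⁿ − σⁿ)), while the n-th coordinate is ((τⁿ⁺¹ − σⁿ⁺¹)/(n+1) − λσⁿ)/(τⁿ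 − σⁿ). (Mass-center formula in the paper's Example on the one-point blow-up of ℂPⁿ.) -/
open MeasureTheory

/-!
Up to a null set, the truncated simplex `{x ≥ 0, ∑ xᵢ ≤ τ, x_p ≤ λ}` is the corner simplex
`{x ≥ 0, ∑ xᵢ ≤ τ}` minus the corner where `x_p ≥ λ`, and that corner is the corner simplex of size
`σ = τ - λ` translated by `λ e_p`. Volumes and first moments are therefore differences of those of
two corner simplices, `tⁿ / n!` and `tⁿ⁺¹ / (n + 1)!` at size `t`; the term `λ σⁿ e_p` records the
translation. The volume of the corner simplex comes from slicing, and the cut above, made at every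
height `s`, then gives its first moment by integrating `(t - s)ⁿ / n!` over `s`.
-/

section Simplex

variable {ι : Type*} [Fintype ι] {n : ℕ} {t c s : ℝ}

/-- The mass center `Cm(Δ)` of a set `Δ ⊆ ℝ^ι`. It has the junk value `0` when `Δ` has volume
`0` or `∞`. -/
noncomputable def massCenter (Δ : Set (ι → ℝ)) : ι → ℝ :=
  fun i => (∫ x in Δ, x i) / volume.real Δ

variable (ι) in
/-- The simplex of size `t` cut off from the positive orthant of `ℝ^ι` by `∑ xᵢ ≤ t`; it is the
moment polytope of complex projective space. -/
def cornerSimplex (t : ℝ) : Set (ι → ℝ) :=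
  {x | (∀ i, 0 ≤ x i) ∧ ∑ i, x i ≤ t}

/-- The part `x p ≤ c` of the corner simplex of size `t`; it is the moment polytope of the one-point
blow-up of complex projective space. -/
def truncatedSimplex (p : ι) (t c : ℝ) : Set (ι → ℝ) :=
  {x | (∀ i, 0 ≤ x i) ∧ ∑ i, x i ≤ t ∧ x p ≤ c}

lemma le_of_mem_cornerSimplex {x : ι → ℝ} (hx : x ∈ cornerSimplex ι t) (i : ι) : x i ≤ t :=
  (Finset.single_le_sum (fun j _ => hx.1 j) (Finset.mem_univ i)).trans hx.2

lemma nonneg_of_mem_cornerSimplex {x : ι → ℝ} (hx : x ∈ cornerSimplex ι t) : 0 ≤ t :=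
  (Finset.sum_nonneg fun i _ => hx.1 i).trans hx.2

lemma isCompact_cornerSimplex (t : ℝ) : IsCompact (cornerSimplex ι t) := by
  refine (isCompact_Icc (a := fun _ : ι => (0 : ℝ)) (b := fun _ => t)).of_isClosed_subset ?_
    fun x hx => ⟨hx.1, le_of_mem_cornerSimplex hx⟩
  simp only [cornerSimplex, Set.ofPred_and, Set.ofPred_forall]
  exact (isClosed_iInter fun i => isClosed_le (by fun_prop) (by fun_prop)).inter
    (isClosed_le (by fun_prop) (by fun_prop))

lemma measurableSet_cornerSimplex (t : ℝ) : MeasurableSet (cornerSimplex ι t) :=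
  (isCompact_cornerSimplex t).measurableSet

lemma integrableOn_cornerSimplex {f : (ι → ℝ) → ℝ} (hf : Continuous f) (t : ℝ) :
    IntegrableOn f (cornerSimplex ι t) :=
  hf.continuousOn.integrableOn_compact (isCompact_cornerSimplex t)

lemma truncatedSimplex_eq_inter (p : ι) (t c : ℝ) :
    truncatedSimplex p t c = cornerSimplex ι t ∩ {x | x p ≤ c} := by
  ext x
  simp only [truncatedSimplex, cornerSimplex, Set.mem_inter_iff, Set.mem_ofPred_eq, and_assoc]

lemma image_add_single_cornerSimplex [DecidableEq ι] (p : ι) (hs : 0 ≤ s) (t : ℝ) :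
    (· + Pi.single p s) '' cornerSimplex ι (t - s) = cornerSimplex ι t ∩ {x | s ≤ x p} := by
  ext x
  have hsum : ∑ i, (x + -Pi.single p s : ι → ℝ) i = ∑ i, x i - s := by
    simp [Finset.sum_add_distrib, sub_eq_add_neg]
  rw [Set.image_add_right, Set.mem_preimage, cornerSimplex, Set.mem_ofPred_eq, hsum,
    sub_le_sub_iff_right]
  constructor
  · rintro ⟨hnonneg, hle⟩
    have hp : s ≤ x p := by simpa using hnonneg p
    refine ⟨⟨fun i => ?_, hle⟩, hp⟩
    obtain rfl | hi := eq_or_ne i p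
    · exact hs.trans hp
    · simpa [hi] using hnonneg i
  · rintro ⟨⟨hnonneg, hle⟩, hp⟩
    refine ⟨fun i => ?_, hle⟩
    obtain rfl | hi := eq_or_ne i p
    · simpa using hp
    · simpa [hi] using hnonneg i

lemma insertNth_mem_cornerSimplex_iff (p : Fin (n + 1)) (y : Fin n → ℝ) :
    p.insertNth (α := fun _ => ℝ) s y ∈ cornerSimplex (Fin (n + 1)) t ↔
      s ∈ Set.Icc 0 t ∧ y ∈ cornerSimplex (Fin n) (t - s) := by
  have hiff : p.insertNth (α := fun _ => ℝ) s y ∈ cornerSimplex (Fin (n + 1)) t ↔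
      0 ≤ s ∧ y ∈ cornerSimplex (Fin n) (t - s) := by
    simp only [cornerSimplex, Set.mem_ofPred_eq, Fin.forall_iff_succAbove p,
      Fin.sum_univ_succAbove _ p, Fin.insertNth_apply_same, Fin.insertNth_apply_succAbove,
      le_sub_iff_add_le', and_assoc]
  rw [hiff, Set.mem_Icc]
  exact ⟨fun h => ⟨⟨h.1, sub_nonneg.1 (nonneg_of_mem_cornerSimplex h.2)⟩, h.2⟩,
    fun h => ⟨h.1.1, h.2⟩⟩

lemma volume_cornerSimplex_fin_succ (n : ℕ) (t : ℝ) :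
    volume (cornerSimplex (Fin (n + 1)) t) =
      ∫⁻ s in Set.Icc 0 t, volume (cornerSimplex (Fin n) (t - s)) := by
  have hpres := (volume_preserving_piFinSuccAbove (fun _ : Fin (n + 1) => ℝ) 0).symm
  rw [← hpres.measure_preimage_equiv, Measure.volume_eq_prod,
    Measure.prod_apply (hpres.measurable (measurableSet_cornerSimplex t)),
    ← lintegral_indicator measurableSet_Icc]
  refine lintegral_congr fun s => ?_
  have hslice : Prod.mk s ⁻¹' ((MeasurableEquiv.piFinSuccAbove (fun _ => ℝ) 0).symm ⁻¹'
      cornerSimplex (Fin (n + 1)) t) =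
        {y | s ∈ Set.Icc 0 t ∧ y ∈ cornerSimplex (Fin n) (t - s)} :=
    Set.ext fun y => insertNth_mem_cornerSimplex_iff 0 y
  rw [hslice]
  by_cases hs : s ∈ Set.Icc 0 t <;> simp [hs]

lemma integral_sub_pow_div_factorial (n : ℕ) (t : ℝ) :
    ∫ s in (0 : ℝ)..t, (t - s) ^ n / n.factorial = t ^ (n + 1) / (n + 1).factorial := by
  rw [intervalIntegral.integral_comp_sub_left (fun u => u ^ n / (n.factorial : ℝ)),
    intervalIntegral.integral_div, integral_pow, sub_self, sub_zero, zero_pow n.succ_ne_zero,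
    sub_zero, div_div, Nat.factorial_succ]
  push_cast
  rfl

lemma volume_cornerSimplex_fin (n : ℕ) (ht : 0 ≤ t) :
    volume (cornerSimplex (Fin n) t) = ENNReal.ofReal (t ^ n / n.factorial) := by
  induction n generalizing t with
  | zero =>
    have huniv : cornerSimplex (Fin 0) t = Set.univ := by
      simp [cornerSimplex, ht]
    simp [huniv, volume_pi]
  | succ n ih =>
    have hcont : Continuous fun s : ℝ => (t - s) ^ n / (n.factorial : ℝ) := by fun_prop
    calc volume (cornerSimplex (Fin (n + 1)) t)
        = ∫⁻ s in Set.Icc 0 t, ENNReal.ofReal ((t - s) ^ n / n.factorial) := by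
          rw [volume_cornerSimplex_fin_succ]
          exact setLIntegral_congr_fun measurableSet_Icc fun s hs => ih (sub_nonneg.2 hs.2)
      _ = ENNReal.ofReal (∫ s in Set.Icc 0 t, (t - s) ^ n / n.factorial) := by
          refine (ofReal_integral_eq_lintegral_ofReal hcont.integrableOn_Icc ?_).symm
          filter_upwards [ae_restrict_mem measurableSet_Icc] with s hs
          have := sub_nonneg.2 hs.2
          positivity
      _ = ENNReal.ofReal (t ^ (n + 1) / (n + 1).factorial) := by
          rw [integral_Icc_eq_integral_Ioc, ← intervalIntegral.integral_of_le ht,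
            integral_sub_pow_div_factorial]

lemma volume_real_cornerSimplex (ht : 0 ≤ t) :
    volume.real (cornerSimplex ι t) = t ^ Fintype.card ι / (Fintype.card ι).factorial := by
  let e := Fintype.equivFin ι
  have hpre : MeasurableEquiv.piCongrLeft (fun _ => ℝ) e ⁻¹' cornerSimplex (Fin _) t =
      cornerSimplex ι t := by
    ext x
    simp only [cornerSimplex, Set.mem_preimage, Set.mem_ofPred_eq, ← e.forall_congr_right,
      ← e.sum_comp, MeasurableEquiv.piCongrLeft_apply_apply]
  rw [measureReal_def, ← hpre,
    (volume_measurePreserving_piCongrLeft (fun _ => ℝ) e).measure_preimage_equiv,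
    volume_cornerSimplex_fin _ ht, ENNReal.toReal_ofReal (by positivity)]

lemma setIntegral_cornerSimplex_apply (p : ι) (ht : 0 ≤ t) :
    ∫ x in cornerSimplex ι t, x p =
      t ^ (Fintype.card ι + 1) / (Fintype.card ι + 1).factorial := by
  classical
  have hmem := ae_restrict_mem (μ := volume) (measurableSet_cornerSimplex (ι := ι) t)
  have hcut {s : ℝ} (hs : s ∈ Set.Ioc 0 t) :
      (volume.restrict (cornerSimplex ι t)).real {x | s ≤ x p} =
        (t - s) ^ Fintype.card ι / (Fintype.card ι).factorial := by
    rw [measureReal_restrict_apply (measurableSet_le (by fun_prop) (by fun_prop)), Set.inter_comm,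
      ← image_add_single_cornerSimplex p hs.1.le, measureReal_def, Set.image_add_right,
      measure_preimage_add_right, ← measureReal_def, volume_real_cornerSimplex (sub_nonneg.2 hs.2)]
  calc ∫ x in cornerSimplex ι t, x p
      = ∫ s in Set.Ioc 0 t, (volume.restrict (cornerSimplex ι t)).real {x | s ≤ x p} :=
        (integrableOn_cornerSimplex (continuous_apply p) t).integral_eq_integral_Ioc_meas_le
          (hmem.mono fun x hx => hx.1 p) (hmem.mono fun x hx => le_of_mem_cornerSimplex hx p)
    _ = ∫ s in (0 : ℝ)..t, (t - s) ^ Fintype.card ι / (Fintype.card ι).factorial := by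
        rw [intervalIntegral.integral_of_le ht]
        exact setIntegral_congr_fun measurableSet_Ioc fun s hs => hcut hs
    _ = _ := integral_sub_pow_div_factorial _ t

lemma setIntegral_truncatedSimplex [DecidableEq ι] {f : (ι → ℝ) → ℝ} (p : ι) (hc : 0 ≤ c)
    (hf : IntegrableOn f (cornerSimplex ι t)) :
    ∫ x in truncatedSimplex p t c, f x =
      (∫ x in cornerSimplex ι t, f x) -
        ∫ x in cornerSimplex ι (t - c), f (x + Pi.single p c) := by
  have hcorner : ∫ x in cornerSimplex ι t ∩ {x | c ≤ x p}, f x =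
      ∫ x in cornerSimplex ι (t - c), f (x + Pi.single p c) := by
    rw [← image_add_single_cornerSimplex p hc]
    exact (measurePreserving_add_right volume _).setIntegral_image_emb
      (measurableEmbedding_addRight _) _ _
  have hne : ∀ᵐ x : ι → ℝ, x p ≠ c := Measure.ae_eval_ne (fun _ : ι => (volume : Measure ℝ)) p c
  have hcorner_iff : ∀ᵐ x, x ∈ cornerSimplex ι t ∩ {x | c ≤ x p} ↔
      x ∈ cornerSimplex ι t \ {x | x p ≤ c} := by
    filter_upwards [hne] with x hx
    simp only [Set.mem_inter_iff, Set.mem_sdiff, Set.mem_ofPred_eq, not_le, hx.symm.le_iff_lt]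
  rw [truncatedSimplex_eq_inter, ← hcorner,
    setIntegral_congr_set (Filter.eventuallyEq_set.2 hcorner_iff), eq_sub_iff_add_eq]
  exact integral_inter_add_sdiff (measurableSet_le (by fun_prop) (by fun_prop)) hf

lemma volume_real_truncatedSimplex (p : ι) (hc : 0 ≤ c) (hct : c ≤ t) :
    volume.real (truncatedSimplex p t c) =
      (t ^ Fintype.card ι - (t - c) ^ Fintype.card ι) / (Fintype.card ι).factorial := by
  classical
  have h := setIntegral_truncatedSimplex p hc
    (integrableOn_cornerSimplex (t := t) (continuous_const (y := (1 : ℝ))))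
  simpa [volume_real_cornerSimplex (hc.trans hct), volume_real_cornerSimplex (sub_nonneg.2 hct),
    sub_div] using h

lemma setIntegral_truncatedSimplex_apply [DecidableEq ι] (p i : ι) (hc : 0 ≤ c) (hct : c ≤ t) :
    ∫ x in truncatedSimplex p t c, x i =
      (t ^ (Fintype.card ι + 1) - (t - c) ^ (Fintype.card ι + 1)) /
          (Fintype.card ι + 1).factorial -
        (Pi.single p c : ι → ℝ) i *
          ((t - c) ^ Fintype.card ι / (Fintype.card ι).factorial) := by
  have hσ : 0 ≤ t - c := sub_nonneg.2 hct
  simp only [setIntegral_truncatedSimplex p hc (integrableOn_cornerSimplex (continuous_apply i) t),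
    Pi.add_apply]
  rw [integral_add (integrableOn_cornerSimplex (continuous_apply i) _)
    (integrableOn_cornerSimplex continuous_const _), setIntegral_const,
    setIntegral_cornerSimplex_apply i (hc.trans hct), setIntegral_cornerSimplex_apply i hσ,
    volume_real_cornerSimplex hσ, smul_eq_mul]
  ring

theorem stmt12_general [DecidableEq ι] (p : ι) (hc : 0 < c) (hct : c ≤ t) :
    massCenter (truncatedSimplex p t c) =
      (t ^ Fintype.card ι - (t - c) ^ Fintype.card ι)⁻¹ •
        (((t ^ (Fintype.card ι + 1) - (t - c) ^ (Fintype.card ι + 1)) / (Fintype.card ι + 1)) • 1 -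
          Pi.single p (c * (t - c) ^ Fintype.card ι)) := by
  ext i
  have hsingle : (Pi.single p (c * (t - c) ^ Fintype.card ι) : ι → ℝ) i =
      (Pi.single p c : ι → ℝ) i * (t - c) ^ Fintype.card ι := by
    simp [Pi.single_apply]
  rw [massCenter, setIntegral_truncatedSimplex_apply p i hc.le hct,
    volume_real_truncatedSimplex p hc.le hct, Nat.factorial_succ]
  simp only [Pi.smul_apply, Pi.sub_apply, Pi.one_apply, smul_eq_mul, hsingle]
  push_cast
  field_simp

end Simplex

/-- Mass center of the truncated simplex (moment polytope of the one-point blow-up of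
`ℂPⁿ`): for `i < n` the `i`-th coordinate is `(τⁿ⁺¹ - σⁿ⁺¹)/((n+1)(τⁿ - σⁿ))`, while the
`n`-th coordinate is `((τⁿ⁺¹ - σⁿ⁺¹)/(n+1) - λσⁿ)/(τⁿ - σⁿ)`, where `σ = τ - λ`. -/
theorem stmt12 {n : ℕ} (hn : 1 ≤ n) (τ lam σ : ℝ) (hlam : 0 < lam) (hτ : lam < τ)
    (hσ : σ = τ - lam)
    (Δ : Set (Fin n → ℝ))
    (hΔ : Δ = {x : Fin n → ℝ | (∀ i, 0 ≤ x i) ∧ ∑ i, x i ≤ τ ∧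
      x ⟨n - 1, by omega⟩ ≤ lam}) :
    (∀ i : Fin n, (i : ℕ) ≠ n - 1 →
      (∫ x in Δ, x i) / (volume Δ).toReal
        = (τ ^ (n + 1) - σ ^ (n + 1)) / ((n + 1) * (τ ^ n - σ ^ n)))
    ∧ (∫ x in Δ, x ⟨n - 1, by omega⟩) / (volume Δ).toReal
        = ((τ ^ (n + 1) - σ ^ (n + 1)) / (n + 1) - lam * σ ^ n) / (τ ^ n - σ ^ n) := by
  subst hΔ hσ
  have h := congrFun (stmt12_general (⟨n - 1, by omega⟩ : Fin n) hlam hτ.le)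
  exact ⟨fun i hi => (h i).trans (by simp [Fin.ext_iff, hi, inv_mul_eq_div, div_div]),
    (h _).trans (by simp [inv_mul_eq_div])⟩
end
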